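/- If (T, f) solves the Duffing boundary value problem for (m, β), then all even-order derivatives of f vanish at the endpoints: f^(2l)(T) = f^(2l)(-T) = 0 for every integer l ≥ 1. -/

import Mathlib

/-!
By Faà di Bruno's formula, the `n`-th derivative of `g ∘ f` at `a` is a sum, over the partitions of
`n` differentiations into blocks of sizes `p₁, …, p_l`, of `D^l g (f a) (f^(p₁) a, …, f^(p_l) a)`.
If the even derivatives of `f` vanish at `a`, only the terms with all `pᵢ` odd survive, and for
these `l` has the parity of `n`. If moreover `g` is odd, then `D^l g 0 = 0` for even `l`, so `g ∘ f`
inherits the vanishing of even derivatives. The equation `f'' = g ∘ f` carries it from order `n` to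
order `n + 2`, starting from `f a = 0`.

The equation holds only on `[-T, T]`, so derivatives are taken within this set; at an endpoint they
are the derivatives of `f`, because `f` is smooth there.
-/

open Real

/-- The Duffing boundary value problem for `(m, β)`: a time `T > 0` and a `C^∞` function
`f` with `f'' = -f³ + β·f` on `[-T, T]`, boundary values `f(±T) = 0`,
`f'(-T) = m`, `f'(T) = -m`, and `f > 0` on `(-T, T)`. -/
def IsDuffingSolution (m : ℕ) (β T : ℝ) (f : ℝ → ℝ) : Prop :=
  0 < T ∧ ContDiff ℝ (⊤ : ℕ∞) f ∧
    (∀ t ∈ Set.Icc (-T) T, deriv (deriv f) t = -(f t) ^ 3 + β * f t) ∧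
    f (-T) = 0 ∧ f T = 0 ∧ deriv f (-T) = (m : ℝ) ∧ deriv f T = -(m : ℝ) ∧
    (∀ t ∈ Set.Ioo (-T) T, 0 < f t)

open scoped ContDiff

lemma sum_partSize {n : ℕ} (c : OrderedFinpartition n) : ∑ i, c.partSize i = n := by
  simpa using Fintype.card_congr c.equivSigma

lemma even_length_iff_of_odd_partSize {n : ℕ} (c : OrderedFinpartition n)
    (hc : ∀ i, Odd (c.partSize i)) : Even c.length ↔ Even n := by
  have h := Finset.odd_sum_iff_odd_card_odd (s := Finset.univ) c.partSize
  rw [sum_partSize] at h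
  simpa [hc, ← Nat.not_even_iff_odd, not_iff_not, iff_comm] using h

section NormedSpace

variable {𝕜 E F : Type*} [NontriviallyNormedField 𝕜]
  [NormedAddCommGroup E] [NormedSpace 𝕜 E] [NormedAddCommGroup F] [NormedSpace 𝕜 F]

lemma iteratedFDeriv_zero_eq_zero_of_odd [CharZero 𝕜] {g : E → F} (hg : Function.Odd g) {n : ℕ}
    (hn : Even n) : iteratedFDeriv 𝕜 n g 0 = 0 := by
  have hneg : g ∘ ContinuousLinearEquiv.neg 𝕜 = -g := funext hg
  have hcomp := (ContinuousLinearEquiv.neg 𝕜).iteratedFDerivWithin_comp_right g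
    uniqueDiffOn_univ (x := 0) (Set.mem_univ _) n
  rw [Set.preimage_univ, hneg, iteratedFDerivWithin_univ, iteratedFDerivWithin_univ,
    iteratedFDeriv_neg_apply, map_zero] at hcomp
  ext v
  have hv : -iteratedFDeriv 𝕜 n g 0 v = iteratedFDeriv 𝕜 n g 0 v :=
    calc -iteratedFDeriv 𝕜 n g 0 v
        = iteratedFDeriv 𝕜 n g 0 fun i => (-1 : 𝕜) • v i := by
          simpa using DFunLike.congr_fun hcomp v
      _ = iteratedFDeriv 𝕜 n g 0 v := by
          rw [ContinuousMultilinearMap.map_smul_univ]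
          simp [hn.neg_one_pow]
  have : IsAddTorsionFree F := .of_isTorsionFree 𝕜 F
  exact neg_eq_self.1 hv

lemma iteratedDerivWithin_comp_eq_zero_of_even {g : E → F} {f : 𝕜 → E} {s : Set 𝕜} {t : Set E}
    {a : 𝕜} {n : ℕ} (hg : ContDiffWithinAt 𝕜 n g t (f a)) (hf : ContDiffWithinAt 𝕜 n f s a)
    (ht : UniqueDiffOn 𝕜 t) (hs : UniqueDiffOn 𝕜 s) (ha : a ∈ s) (hst : Set.MapsTo f s t)
    (hg_even : ∀ k ≤ n, Even k → iteratedFDerivWithin 𝕜 k g t (f a) = 0)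
    (hf_even : ∀ k ≤ n, Even k → iteratedDerivWithin k f s a = 0) (hn : Even n) :
    iteratedDerivWithin n (g ∘ f) s a = 0 := by
  rw [iteratedDerivWithin_vcomp_eq_sum_orderedFinpartition hg hf ht hs ha hst le_rfl]
  refine Finset.sum_eq_zero fun c _ => ?_
  by_cases hc : ∀ i, Odd (c.partSize i)
  · rw [hg_even c.length c.length_le ((even_length_iff_of_odd_partSize c hc).2 hn)]
    rfl
  · obtain ⟨i, hi⟩ := not_forall.1 hc
    exact ContinuousMultilinearMap.map_coord_zero _ i
      (hf_even _ (c.partSize_le i) (Nat.not_odd_iff_even.1 hi))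

theorem duffing_even_derivatives_vanish_general [CharZero 𝕜] {g : E → E} {f : 𝕜 → E} {s : Set 𝕜}
    {a : 𝕜} (hs : UniqueDiffOn 𝕜 s) (hg : ContDiffAt 𝕜 ∞ g 0) (hg_odd : Function.Odd g)
    (hf : ContDiffWithinAt 𝕜 ∞ f s a)
    (hode : Set.EqOn (iteratedDerivWithin 2 f s) (g ∘ f) s) (ha : a ∈ s) (hfa : f a = 0)
    {n : ℕ} (hn : Even n) : iteratedDerivWithin n f s a = 0 := by
  induction n using Nat.strong_induction_on with
  | _ n ih =>
    match n with
    | 0 => simpa using hfa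
    | 1 => exact absurd hn (by decide)
    | n + 2 =>
      have hderiv : iteratedDerivWithin (n + 2) f s
          = iteratedDerivWithin n (iteratedDerivWithin 2 f s) s := by
        simp only [iteratedDerivWithin_succ', iteratedDerivWithin_zero]
      rw [hderiv, iteratedDerivWithin_congr hode ha]
      refine iteratedDerivWithin_comp_eq_zero_of_even (t := Set.univ) ?_
        (hf.of_le (mod_cast le_top)) uniqueDiffOn_univ hs ha (Set.mapsTo_univ f s) ?_
        (fun k hk hk_even => ih k (by lia) hk_even) (by simpa [Nat.even_add] using hn)
      · rw [hfa]
        exact (hg.of_le (mod_cast le_top)).contDiffWithinAt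
      · intro k _ hk_even
        rw [hfa, iteratedFDerivWithin_univ]
        exact iteratedFDeriv_zero_eq_zero_of_odd hg_odd hk_even

end NormedSpace

lemma IsDuffingSolution.iteratedDeriv_eq_zero_of_even {m : ℕ} {β T : ℝ} {f : ℝ → ℝ}
    (h : IsDuffingSolution m β T f) {a : ℝ} (ha : a ∈ Set.Icc (-T) T) (hfa : f a = 0) {n : ℕ}
    (hn : Even n) : iteratedDeriv n f a = 0 := by
  obtain ⟨hT, hf, hode, -⟩ := h
  have hs : UniqueDiffOn ℝ (Set.Icc (-T) T) := uniqueDiffOn_Icc (neg_lt_self hT)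
  have hwithin (k : ℕ) {t : ℝ} (ht : t ∈ Set.Icc (-T) T) :
      iteratedDerivWithin k f (Set.Icc (-T) T) t = iteratedDeriv k f t :=
    iteratedDerivWithin_eq_iteratedDeriv hs (hf.of_le (mod_cast le_top)).contDiffAt ht
  rw [← hwithin n ha]
  refine duffing_even_derivatives_vanish_general (g := fun x => -x ^ 3 + β * x) hs (by fun_prop)
    (fun x => by ring) hf.contDiffWithinAt (fun t ht => ?_) ha hfa hn
  rw [hwithin 2 ht, iteratedDeriv_succ', iteratedDeriv_one]
  exact hode t ht

/-- All even-order derivatives of a Duffing solution vanish at the endpoints. -/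
theorem duffing_even_derivatives_vanish (m : ℕ) (hm : 0 < m) (β T : ℝ) (f : ℝ → ℝ)
    (h : IsDuffingSolution m β T f) :
    ∀ l : ℕ, 1 ≤ l →
      iteratedDeriv (2 * l) f T = 0 ∧ iteratedDeriv (2 * l) f (-T) = 0 := by
  intro l _
  have ⟨hT, _, _, h_left, h_right, _⟩ := h
  have hT' : -T ≤ T := neg_le_self hT.le
  exact ⟨h.iteratedDeriv_eq_zero_of_even (Set.right_mem_Icc.2 hT') h_right (even_two_mul l),
    h.iteratedDeriv_eq_zero_of_even (Set.left_mem_Icc.2 hT') h_left (even_two_mul l)⟩
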